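/- Let α > 0 be a non-integer real number, let d > 0 and x > 0. Then lim_{t → 0⁺} t^{α/2} · (x/(2√(d t))) · M(−α/2 + 1/2, 3/2, −x²/(4 d t)) = (√π / Γ(α/2 + 1)) · x^α / (2^{α+1} d^{α/2}). -/

import Mathlib

noncomputable def poch (a : ℝ) (s : ℕ) : ℝ := ∏ i ∈ Finset.range s, (a + i)

/-- Kummer's confluent hypergeometric function `M(a,b,z)`,
defined by the everywhere-convergent series `M(a,b,z) = Σ_{s} (a)_s z^s / ((b)_s s!)`. -/
noncomputable def kummerM (a b z : ℝ) : ℝ :=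
  ∑' s : ℕ, poch a s / (poch b s * (Nat.factorial s)) * z ^ s

/-- Tricomi's confluent hypergeometric function
`U(a,b,z) = (1/Γ(a)) ∫_0^∞ e^{−z t} t^{a−1} (1+t)^{b−a−1} dt`. -/
noncomputable def tricomiU (a b z : ℝ) : ℝ :=
  (1 / Real.Gamma a) *
    ∫ t in Set.Ioi (0:ℝ), Real.exp (-z * t) * t ^ (a - 1) * (1 + t) ^ (b - a - 1)

/-!
For `0 < a < b`, Euler's integral exhibits `M(a, b, ·)` as the moment generating function of the
beta distribution with parameters `a` and `b - a`. Up to normalisation, `z ^ a * M(a, b, -z)` is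
then the integral of `(1 - t) ^ (b - a - 1)` against the gamma density of shape `a` and rate `z`,
which concentrates at `0` as `z → ∞`; hence `z ^ a * M(a, b, -z) → Γ(b) / Γ(b - a)`.
The relation `M(a, b, -z) = M(a+1, b+1, -z) + (b - a) / (b (b + 1)) * z * M(a+1, b+2, -z)` carries
this limit from `a + 1` down to `a`, hence to every `a < b`. The theorem is the case
`a = (1 - α) / 2`, `b = 3 / 2`, with `z = x ^ 2 / (4 d t)`.
-/

open Filter MeasureTheory ProbabilityTheory Set Topology
open scoped Nat

lemma poch_zero (a : ℝ) : poch a 0 = 1 := by simp [poch]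

lemma poch_succ (a : ℝ) (s : ℕ) : poch a (s + 1) = poch a s * (a + s) :=
  Finset.prod_range_succ _ s

lemma poch_succ' (a : ℝ) (s : ℕ) : poch a (s + 1) = a * poch (a + 1) s := by
  simp [poch, Finset.prod_range_succ', mul_comm a, add_assoc, add_comm (1 : ℝ)]

lemma poch_ne_zero {b : ℝ} (hb : ∀ n : ℕ, b ≠ -n) (s : ℕ) : poch b s ≠ 0 :=
  Finset.prod_ne_zero_iff.2 fun i _ h ↦ hb i (eq_neg_of_add_eq_zero_left h)

lemma poch_mul_Gamma {a : ℝ} (ha : ∀ n : ℕ, a ≠ -n) (s : ℕ) :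
    poch a s * Real.Gamma a = Real.Gamma (a + s) := by
  induction s with
  | zero => simp [poch_zero]
  | succ s ih =>
    have has : a + s ≠ 0 := fun h ↦ ha s (eq_neg_of_add_eq_zero_left h)
    rw [poch_succ, mul_right_comm, ih, Nat.cast_succ, ← add_assoc, Real.Gamma_add_one has, mul_comm]

lemma ne_neg_natCast_of_pos {a : ℝ} (ha : 0 < a) (n : ℕ) : a ≠ -n :=
  ((neg_nonpos.2 n.cast_nonneg).trans_lt ha).ne'

lemma add_natCast_ne_neg_natCast {b : ℝ} (hb : ∀ n : ℕ, b ≠ -n) (m n : ℕ) : b + m ≠ -n := by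
  intro h
  apply hb (n + m)
  push_cast
  linarith

section KummerSeries

variable {a b : ℝ}

lemma summable_kummerM (a b z : ℝ) :
    Summable fun s : ℕ ↦ poch a s / (poch b s * s !) * z ^ s := by
  have hratio : Tendsto (fun s : ℕ ↦ (a + 1 * s) / (b + 1 * s) * (z / (s + 1))) atTop (𝓝 0) := by
    simpa [div_eq_mul_inv] using (tendsto_add_mul_div_add_mul_atTop_nhds a b 1 one_ne_zero).mul
      (tendsto_one_div_add_atTop_nhds_zero_nat.const_mul z)
  refine summable_of_ratio_norm_eventually_le one_half_lt_one ?_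
  filter_upwards [hratio.norm.eventually_le_const (u := 1 / 2) (by norm_num)] with s hs
  have hterm : poch a (s + 1) / (poch b (s + 1) * (s + 1)!) * z ^ (s + 1) =
      (a + 1 * s) / (b + 1 * s) * (z / (s + 1)) * (poch a s / (poch b s * s !) * z ^ s) := by
    rw [poch_succ, poch_succ, Nat.factorial_succ, pow_succ]
    push_cast
    simp only [one_mul, div_eq_mul_inv, mul_inv]
    ring
  rw [hterm, norm_mul]
  gcongr

lemma hasSum_kummerM (a b z : ℝ) :
    HasSum (fun s : ℕ ↦ poch a s / (poch b s * s !) * z ^ s) (kummerM a b z) :=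
  (summable_kummerM a b z).hasSum

lemma kummerM_term_succ (hb : ∀ n : ℕ, b ≠ -n) (z : ℝ) (s : ℕ) :
    poch a (s + 1) / (poch b (s + 1) * (s + 1)!) * z ^ (s + 1) =
      poch (a + 1) (s + 1) / (poch (b + 1) (s + 1) * (s + 1)!) * z ^ (s + 1) -
        (b - a) / (b * (b + 1)) * (z * (poch (a + 1) s / (poch (b + 2) s * s !) * z ^ s)) := by
  have h0 : b ≠ 0 := by simpa using hb 0
  have h1 : b + 1 ≠ 0 := by simpa using add_natCast_ne_neg_natCast hb 1 0
  have h2 : poch (b + 2) s ≠ 0 :=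
    poch_ne_zero (by simpa using add_natCast_ne_neg_natCast hb 2) s
  have hs : b + 1 + s ≠ 0 := by
    simpa [add_assoc, add_comm (1 : ℝ)] using add_natCast_ne_neg_natCast hb (s + 1) 0
  have hshift : poch (b + 1) s = (b + 1) * poch (b + 2) s / (b + 1 + s) := by
    rw [eq_div_iff hs, ← poch_succ, poch_succ', add_assoc, one_add_one_eq_two]
  rw [poch_succ' a, poch_succ' b, poch_succ (a + 1), poch_succ (b + 1), hshift,
    Nat.factorial_succ]
  push_cast
  field_simp
  ring

lemma kummerM_eq_sub (hb : ∀ n : ℕ, b ≠ -n) (z : ℝ) :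
    kummerM a b z =
      kummerM (a + 1) (b + 1) z - (b - a) / (b * (b + 1)) * (z * kummerM (a + 1) (b + 2) z) := by
  have hleft := (hasSum_nat_add_iff' 1).2 (hasSum_kummerM a b z)
  have hright := ((hasSum_nat_add_iff' 1).2 (hasSum_kummerM (a + 1) (b + 1) z)).sub
    (((hasSum_kummerM (a + 1) (b + 2) z).mul_left z).mul_left ((b - a) / (b * (b + 1))))
  simp_rw [← kummerM_term_succ hb] at hright
  have hunique := hleft.unique hright
  simp only [Finset.sum_range_one, poch_zero] at hunique
  linarith

end KummerSeries

section EulerIntegral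

variable {a c : ℝ}

lemma betaPDFReal_nonneg (ha : 0 < a) (hc : 0 < c) (t : ℝ) : 0 ≤ betaPDFReal a c t := by
  by_cases ht : 0 < t ∧ t < 1
  · exact (betaPDFReal_pos ht.1 ht.2 ha hc).le
  · simp [betaPDFReal, ht]

lemma integral_betaPDFReal (ha : 0 < a) (hc : 0 < c) : ∫ t, betaPDFReal a c t = 1 := by
  rw [integral_eq_lintegral_of_nonneg_ae (ae_of_all _ (betaPDFReal_nonneg ha hc))
    (stronglyMeasurable_betaPDFReal a c).aestronglyMeasurable]
  simpa [betaPDF] using congrArg ENNReal.toReal (lintegral_betaPDF_eq_one ha hc)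

lemma beta_add_natCast (ha : ∀ n : ℕ, a ≠ -n) (hac : ∀ n : ℕ, a + c ≠ -n) (s : ℕ) :
    beta (a + s) c = poch a s / poch (a + c) s * beta a c := by
  have hΓ : Real.Gamma (a + c) ≠ 0 := Real.Gamma_ne_zero hac
  have hpoch : poch (a + c) s ≠ 0 := poch_ne_zero hac s
  rw [beta, beta, add_right_comm, ← poch_mul_Gamma ha, ← poch_mul_Gamma hac]
  field_simp

lemma integral_betaPDFReal_mul_pow (ha : 0 < a) (hc : 0 < c) (s : ℕ) :
    ∫ t, betaPDFReal a c t * t ^ s = poch a s / poch (a + c) s := by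
  have has : 0 < a + s := by positivity
  have hshift (t : ℝ) : betaPDFReal a c t * t ^ s =
      beta (a + s) c / beta a c * betaPDFReal (a + s) c t := by
    by_cases ht : 0 < t ∧ t < 1
    · have := (beta_pos has hc).ne'
      rw [betaPDFReal, betaPDFReal, if_pos ht, if_pos ht, add_sub_right_comm,
        Real.rpow_add_natCast ht.1.ne']
      field_simp
    · simp [betaPDFReal, ht]
  simp_rw [hshift]
  rw [integral_const_mul, integral_betaPDFReal has hc, mul_one,
    beta_add_natCast (ne_neg_natCast_of_pos ha) (ne_neg_natCast_of_pos (add_pos ha hc)),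
    mul_div_cancel_right₀ _ (beta_pos ha hc).ne']

lemma hasSum_integral_mul_exp {f : ℝ → ℝ} {R : ℝ} (hf : Integrable f)
    (hfR : ∀ t, f t ≠ 0 → |t| ≤ R) (z : ℝ) :
    HasSum (fun s : ℕ ↦ (∫ t, f t * t ^ s) * (z ^ s / s !)) (∫ t, f t * Real.exp (z * t)) := by
  have hexp (y : ℝ) : HasSum (fun s : ℕ ↦ y ^ s / s !) (Real.exp y) := by
    rw [Real.exp_eq_exp_ℝ]
    exact NormedSpace.expSeries_div_hasSum_exp y
  have hbound (t : ℝ) := (hexp (|z| * R)).mul_left ‖f t‖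
  simp_rw [← integral_mul_const]
  refine hasSum_integral_of_dominated_convergence
    (fun s t ↦ ‖f t‖ * ((|z| * R) ^ s / s !)) (fun s ↦ ?_) (fun s ↦ ae_of_all _ fun t ↦ ?_)
    (ae_of_all _ fun t ↦ (hbound t).summable) ?_ (ae_of_all _ fun t ↦ ?_)
  · exact (hf.1.mul (by fun_prop)).mul_const _
  · by_cases ht : f t = 0
    · simp [ht]
    · rw [mul_assoc, norm_mul, mul_div_assoc', ← mul_pow, norm_div, norm_pow, norm_mul,
        mul_comm ‖t‖, Real.norm_natCast]
      gcongr
      exacts [le_rfl, hfR t ht]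
  · simpa only [(hbound _).tsum_eq] using hf.norm.mul_const _
  · refine (hexp (z * t)).mul_left (f t) |>.congr_fun fun s ↦ ?_
    rw [mul_pow]
    ring

lemma kummerM_eq_integral_betaPDFReal (ha : 0 < a) (hc : 0 < c) (z : ℝ) :
    kummerM a (a + c) z = ∫ t, betaPDFReal a c t * Real.exp (z * t) := by
  have hint : Integrable (betaPDFReal a c) :=
    integrable_of_integral_eq_one (integral_betaPDFReal ha hc)
  have hsupp (t : ℝ) (ht : betaPDFReal a c t ≠ 0) : |t| ≤ 1 := by
    have ht' : 0 < t ∧ t < 1 := by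
      by_contra h
      simp [betaPDFReal, h] at ht
    rw [abs_of_pos ht'.1]
    exact ht'.2.le
  rw [← (hasSum_integral_mul_exp hint hsupp z).tsum_eq, kummerM]
  refine tsum_congr fun s ↦ ?_
  rw [integral_betaPDFReal_mul_pow ha hc]
  ring

end EulerIntegral

section Watson

variable {a : ℝ}

lemma integral_gammaPDFReal {r : ℝ} (ha : 0 < a) (hr : 0 < r) :
    ∫ t, gammaPDFReal a r t = 1 := by
  rw [integral_eq_lintegral_of_nonneg_ae (ae_of_all _ (gammaPDFReal_nonneg ha hr))
    (stronglyMeasurable_gammaPDFReal a r).aestronglyMeasurable]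
  simpa [gammaPDF] using congrArg ENNReal.toReal (lintegral_gammaPDF_eq_one ha hr)

lemma gammaPDFReal_eq_mul_gammaPDFReal_one {r : ℝ} (hr : 0 < r) (t : ℝ) :
    gammaPDFReal a r t = r * gammaPDFReal a 1 (r * t) := by
  by_cases ht : 0 ≤ t
  · rw [gammaPDFReal, gammaPDFReal, if_pos ht, if_pos (mul_nonneg hr.le ht),
      Real.mul_rpow hr.le ht, Real.rpow_sub_one hr.ne', Real.one_rpow, one_mul]
    field_simp
  · rw [gammaPDFReal, gammaPDFReal, if_neg ht, if_neg (by simpa [hr] using ht), mul_zero]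

lemma tendsto_norm_mul_gammaPDFReal_cobounded (a : ℝ) :
    Tendsto (fun t ↦ ‖t‖ * gammaPDFReal a 1 t) (Bornology.cobounded ℝ) (𝓝 0) := by
  rw [IsOrderBornology.cobounded_eq, tendsto_sup]
  constructor
  · refine tendsto_const_nhds.congr' ?_
    filter_upwards [eventually_lt_atBot 0] with t ht
    rw [gammaPDFReal, if_neg ht.not_ge, mul_zero]
  · have hlim := (tendsto_rpow_mul_exp_neg_mul_atTop_nhds_zero a 1 one_pos).const_mul
      (Real.Gamma a)⁻¹
    rw [mul_zero] at hlim
    refine hlim.congr' ?_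
    filter_upwards [eventually_gt_atTop 0] with t ht
    rw [gammaPDFReal, if_pos ht.le, Real.norm_of_nonneg ht.le, Real.rpow_sub_one ht.ne',
      Real.one_rpow, neg_mul]
    field_simp

/-- The leading term of Watson's lemma. -/
lemma tendsto_integral_gammaPDFReal_smul {E : Type*} [NormedAddCommGroup E] [NormedSpace ℝ E]
    [CompleteSpace E] (ha : 0 < a) {g : ℝ → E} (hg : Integrable g) (hg₀ : ContinuousAt g 0) :
    Tendsto (fun r ↦ ∫ t, gammaPDFReal a r t • g t) atTop (𝓝 (g 0)) := by
  have hpeak := tendsto_integral_comp_smul_smul_of_integrable (μ := volume)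
    (gammaPDFReal_nonneg ha one_pos) (integral_gammaPDFReal ha one_pos)
    (by simpa using tendsto_norm_mul_gammaPDFReal_cobounded a) hg hg₀
  refine hpeak.congr' ?_
  filter_upwards [eventually_gt_atTop 0] with r hr
  simp only [Module.finrank_self, pow_one, smul_eq_mul, ← gammaPDFReal_eq_mul_gammaPDFReal_one hr]

end Watson

lemma integrable_indicator_one_sub_rpow {c : ℝ} (hc : 0 < c) :
    Integrable ((Ioo (-1) 1).indicator fun t : ℝ ↦ (1 - t) ^ (c - 1)) := by
  have hrpow : IntervalIntegrable (fun t : ℝ ↦ t ^ (c - 1)) volume 2 0 :=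
    intervalIntegral.intervalIntegrable_rpow' (by linarith)
  have hsub : IntervalIntegrable (fun t : ℝ ↦ (1 - t) ^ (c - 1)) volume (-1) 1 := by
    convert hrpow.comp_sub_left 1 using 1 <;> norm_num
  exact (((intervalIntegrable_iff_integrableOn_Ioc_of_le (by norm_num)).1 hsub).mono_set
    Ioo_subset_Ioc_self).integrable_indicator measurableSet_Ioo

lemma rpow_mul_kummerM_neg_eq_integral {a c z : ℝ} (ha : 0 < a) (hc : 0 < c) (hz : 0 < z) :
    z ^ a * kummerM a (a + c) (-z) = Real.Gamma (a + c) / Real.Gamma c *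
      ∫ t, gammaPDFReal a z t • (Ioo (-1) 1).indicator (fun t : ℝ ↦ (1 - t) ^ (c - 1)) t := by
  rw [kummerM_eq_integral_betaPDFReal ha hc, ← integral_const_mul, ← integral_const_mul]
  refine integral_congr_ae ?_
  filter_upwards [Measure.ae_ne volume 0] with t ht₀
  have hΓa := (Real.Gamma_pos_of_pos ha).ne'
  have hΓc := (Real.Gamma_pos_of_pos hc).ne'
  have hΓ := (Real.Gamma_pos_of_pos (add_pos ha hc)).ne'
  rcases ht₀.lt_or_gt with ht | ht
  · simp [betaPDFReal, gammaPDFReal, ht.not_gt, ht.not_ge]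
  by_cases ht₁ : t < 1
  · have htmem : t ∈ Ioo (-1) 1 := ⟨by linarith, ht₁⟩
    rw [indicator_of_mem htmem, betaPDFReal, gammaPDFReal, if_pos ⟨ht, ht₁⟩, if_pos ht.le, beta,
      smul_eq_mul, neg_mul]
    field_simp
  · simp [betaPDFReal, ht₁]

lemma tendsto_rpow_mul_kummerM_neg_of_pos {a b : ℝ} (ha : 0 < a) (hab : a < b) :
    Tendsto (fun z ↦ z ^ a * kummerM a b (-z)) atTop
      (𝓝 (Real.Gamma b / Real.Gamma (b - a))) := by
  obtain ⟨c, hc, rfl⟩ : ∃ c > 0, b = a + c := ⟨b - a, sub_pos.2 hab, by ring⟩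
  have hcont : ContinuousAt ((Ioo (-1) 1).indicator fun t : ℝ ↦ (1 - t) ^ (c - 1)) 0 := by
    have hrpow : ContinuousAt (fun t : ℝ ↦ (1 - t) ^ (c - 1)) 0 :=
      ContinuousAt.rpow_const (by fun_prop) (Or.inl (by norm_num))
    refine hrpow.congr ?_
    filter_upwards [Ioo_mem_nhds (by norm_num : (-1 : ℝ) < 0) one_pos] with t ht
    rw [indicator_of_mem ht]
  have hwatson := (tendsto_integral_gammaPDFReal_smul ha (integrable_indicator_one_sub_rpow hc)
    hcont).const_mul (Real.Gamma (a + c) / Real.Gamma c)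
  rw [indicator_of_mem (by norm_num), sub_zero, Real.one_rpow, mul_one] at hwatson
  rw [add_sub_cancel_left]
  refine hwatson.congr' ?_
  filter_upwards [eventually_gt_atTop 0] with z hz
  exact (rpow_mul_kummerM_neg_eq_integral ha hc hz).symm

lemma Gamma_add_two {s : ℝ} (h0 : s ≠ 0) (h1 : s + 1 ≠ 0) :
    Real.Gamma (s + 2) = s * (s + 1) * Real.Gamma s := by
  rw [← one_add_one_eq_two, ← add_assoc, Real.Gamma_add_one h1, Real.Gamma_add_one h0]
  ring

lemma tendsto_rpow_mul_kummerM_neg_of_add_one {a b : ℝ} (hab : a ≠ b) (hb : ∀ n : ℕ, b ≠ -n)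
    (h₁ : Tendsto (fun z ↦ z ^ (a + 1) * kummerM (a + 1) (b + 1) (-z)) atTop
      (𝓝 (Real.Gamma (b + 1) / Real.Gamma (b + 1 - (a + 1)))))
    (h₂ : Tendsto (fun z ↦ z ^ (a + 1) * kummerM (a + 1) (b + 2) (-z)) atTop
      (𝓝 (Real.Gamma (b + 2) / Real.Gamma (b + 2 - (a + 1))))) :
    Tendsto (fun z ↦ z ^ a * kummerM a b (-z)) atTop
      (𝓝 (Real.Gamma b / Real.Gamma (b - a))) := by
  have hb₀ : b ≠ 0 := by simpa using hb 0
  have hb₁ : b + 1 ≠ 0 := by simpa using add_natCast_ne_neg_natCast hb 1 0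
  have hba : b - a ≠ 0 := sub_ne_zero.2 hab.symm
  have hlim := (tendsto_inv_atTop_zero.mul h₁).add (h₂.const_mul ((b - a) / (b * (b + 1))))
  have hvalue : (b - a) / (b * (b + 1)) * (Real.Gamma (b + 2) / Real.Gamma (b + 2 - (a + 1))) =
      Real.Gamma b / Real.Gamma (b - a) := by
    rw [Gamma_add_two hb₀ hb₁, show b + 2 - (a + 1) = b - a + 1 by ring, Real.Gamma_add_one hba]
    field_simp
  rw [zero_mul, zero_add, hvalue] at hlim
  refine hlim.congr' ?_
  filter_upwards [eventually_gt_atTop 0] with z hz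
  rw [kummerM_eq_sub hb, Real.rpow_add_one hz.ne']
  field_simp
  ring

theorem tendsto_rpow_mul_kummerM_neg {a b : ℝ} (hab : a < b) (hb : ∀ n : ℕ, b ≠ -n) :
    Tendsto (fun z ↦ z ^ a * kummerM a b (-z)) atTop
      (𝓝 (Real.Gamma b / Real.Gamma (b - a))) := by
  obtain ⟨n, hn⟩ := exists_nat_gt (-a)
  induction n generalizing a b with
  | zero => exact tendsto_rpow_mul_kummerM_neg_of_pos (by simpa using hn) hab
  | succ n ih =>
    have hn' : -(a + 1) < n := by
      push_cast at hn
      linarith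
    exact tendsto_rpow_mul_kummerM_neg_of_add_one hab.ne hb
      (ih (by linarith) (by simpa using add_natCast_ne_neg_natCast hb 1) hn')
      (ih (by linarith) (by simpa using add_natCast_ne_neg_natCast hb 2) hn')

section Rescaling

variable {d x : ℝ}

lemma tendsto_sq_div_mul_nhdsGT_zero (hd : 0 < d) (hx : 0 < x) :
    Tendsto (fun t : ℝ ↦ x ^ 2 / (4 * d * t)) (𝓝[>] 0) atTop := by
  have h := tendsto_inv_nhdsGT_zero.const_mul_atTop (show 0 < x ^ 2 / (4 * d) by positivity)
  simpa only [← div_eq_mul_inv, div_div] using h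

lemma rpow_mul_div_sqrt_eq (α : ℝ) {t : ℝ} (hd : 0 < d) (hx : 0 < x) (ht : 0 < t) :
    t ^ (α / 2) * (x / (2 * √(d * t))) =
      x ^ α / (2 ^ α * d ^ (α / 2)) * (x ^ 2 / (4 * d * t)) ^ (-α / 2 + 1 / 2) := by
  set w := x / (2 * √(d * t)) with hw
  have hw₀ : 0 < w := by positivity
  have hwsq : x ^ 2 / (4 * d * t) = w ^ (2 : ℝ) := by
    rw [Real.rpow_two, hw, div_pow, mul_pow, Real.sq_sqrt (by positivity)]
    ring
  have hwα : w ^ α = x ^ α / (2 ^ α * (d ^ (α / 2) * t ^ (α / 2))) := by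
    rw [hw, Real.div_rpow hx.le (by positivity), Real.mul_rpow two_pos.le (Real.sqrt_nonneg _),
      Real.sqrt_eq_rpow, ← Real.rpow_mul (by positivity), one_div_mul_eq_div,
      Real.mul_rpow hd.le ht.le]
  rw [hwsq, ← Real.rpow_mul hw₀.le, show 2 * (-α / 2 + 1 / 2) = 1 - α by ring,
    Real.rpow_sub hw₀, Real.rpow_one, hwα]
  field_simp

end Rescaling

lemma Gamma_three_halves : Real.Gamma (3 / 2) = √Real.pi / 2 := by
  rw [show (3 / 2 : ℝ) = 1 / 2 + 1 by norm_num, Real.Gamma_add_one (by norm_num),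
    Real.Gamma_one_half_eq]
  ring

theorem statement_13_general (α d x : ℝ) (hα : -2 < α) (hd : 0 < d) (hx : 0 < x) :
    Tendsto
      (fun t : ℝ ↦ t ^ (α / 2) * (x / (2 * √(d * t))) *
        kummerM (-α / 2 + 1 / 2) (3 / 2) (-x ^ 2 / (4 * d * t)))
      (𝓝[>] 0)
      (𝓝 (√Real.pi / Real.Gamma (α / 2 + 1) * (x ^ α / (2 ^ (α + 1) * d ^ (α / 2))))) := by
  have hkummer := tendsto_rpow_mul_kummerM_neg (a := -α / 2 + 1 / 2) (b := 3 / 2) (by linarith)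
    (ne_neg_natCast_of_pos (by norm_num))
  have hlim := (hkummer.comp (tendsto_sq_div_mul_nhdsGT_zero hd hx)).const_mul
    (x ^ α / (2 ^ α * d ^ (α / 2)))
  have hvalue : x ^ α / (2 ^ α * d ^ (α / 2)) *
      (Real.Gamma (3 / 2) / Real.Gamma (3 / 2 - (-α / 2 + 1 / 2))) =
      √Real.pi / Real.Gamma (α / 2 + 1) * (x ^ α / (2 ^ (α + 1) * d ^ (α / 2))) := by
    rw [Gamma_three_halves, show 3 / 2 - (-α / 2 + 1 / 2) = α / 2 + 1 by ring,
      Real.rpow_add_one two_ne_zero]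
    ring
  rw [hvalue] at hlim
  refine hlim.congr' ?_
  filter_upwards [self_mem_nhdsWithin] with t ht
  rw [rpow_mul_div_sqrt_eq α hd hx ht, Function.comp_apply, neg_div _ (x ^ 2),
    mul_assoc (x ^ α / _)]

/-- for non-integer `α > 0`, `d > 0`, `x > 0`,
`lim_{t→0⁺} t^{α/2} (x/(2√(dt))) M(−α/2+1/2, 3/2, −x²/(4dt))
  = (√π/Γ(α/2+1)) · x^α/(2^{α+1} d^{α/2})`. -/
theorem statement_13 (α d x : ℝ) (hα : 0 < α) (hαnotint : ∀ n : ℤ, α ≠ n)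
    (hd : 0 < d) (hx : 0 < x) :
    Filter.Tendsto
      (fun t : ℝ => t ^ (α / 2) * (x / (2 * Real.sqrt (d * t))) *
        kummerM (-α / 2 + 1 / 2) (3 / 2) (-x ^ 2 / (4 * d * t)))
      (nhdsWithin 0 (Set.Ioi 0))
      (nhds (Real.sqrt Real.pi / Real.Gamma (α / 2 + 1) *
        (x ^ α / ((2:ℝ) ^ (α + 1) * d ^ (α / 2))))) := by
  exact statement_13_general α d x (by linarith) hd hx
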